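/- arXiv:1206.1996 — 2 statements merged into one kernel-verified Lean document; each statement's English description precedes it below -/
import Mathlib

section
/- Let k ≥ 6 and k - ⌈log₂ k⌉ ≤ r ≤ k - 1. Then m(n, r, k) = Θ(n^r); that is, there exist constants c₁, c₂ > 0 and n₀ such that for all n ≥ n₀, c₁ · n^r ≤ m(n, r, k) ≤ c₂ · n^r. -/
/-!
The upper bound is `m n r k ≤ n.choose r ≤ n ^ r`.

For the lower bound take the complete `r`-partite hypergraph with parts of size `q = n / r`; it has
`q ^ r` edges. Suppose `i ≥ 1` of its edges span `u` vertices, `a_j` of them in part `j`. Then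
`i ≤ ∏ a_j ≤ ∏ 2 ^ (a_j - 1) = 2 ^ (u - r)`. If `u < i ≤ k`, then `u ≤ k - 1`, and the hypothesis
on `r` gives `2 ^ (k - 1 - r) ≤ k - 1`; descending from `k - 1` to `u` halves the left side in each
step and lowers the right side only by one, so `2 ^ (u - r) ≤ u < i`, a contradiction. Hence every
`i ≤ k` edges span at least `i` vertices.
-/

open Finset

/-- The combinatorial-batch-code property: `F` is a simple `r`-uniform hypergraph on
vertex set `Fin n` in which every collection of `i` distinct edges spans at least `i`
vertices, for all `1 ≤ i ≤ k`. -/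
def IsBatchCode (n r k : ℕ) (F : Finset (Finset (Fin n))) : Prop :=
  (∀ e ∈ F, e.card = r) ∧
    ∀ i : ℕ, 1 ≤ i → i ≤ k → ∀ S ⊆ F, S.card = i → i ≤ (S.sup id).card

/-- `m n r k` is the maximum number of edges of a simple `r`-uniform hypergraph on `n`
vertices in which every collection of `i` distinct edges spans at least `i` vertices,
for all `1 ≤ i ≤ k`. -/
noncomputable def m (n r k : ℕ) : ℕ :=
  sSup {c : ℕ | ∃ F : Finset (Finset (Fin n)), IsBatchCode n r k F ∧ F.card = c}

lemma two_pow_le_add_of_two_pow_le {r : ℕ} (hr : 1 ≤ r) (d s : ℕ)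
    (h : 2 ^ (d + s) ≤ r + (d + s)) : 2 ^ d ≤ r + d := by
  induction s with
  | zero => simpa using h
  | succ s ih =>
    apply ih
    rw [← add_assoc, pow_succ] at h
    omega

section Partite

variable {n r q : ℕ}

/-- The edge of the complete `r`-partite hypergraph that picks the vertex `f j` from each part `j`.
The map `φ` embeds the `r` parts of size `q` in the vertex set `Fin n`. -/
def partiteEdge (φ : Fin r × Fin q ↪ Fin n) (f : Fin r → Fin q) : Finset (Fin n) :=
  univ.image fun j => φ (j, f j)

lemma mem_partiteEdge (φ : Fin r × Fin q ↪ Fin n) (f : Fin r → Fin q) (j : Fin r) (a : Fin q) :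
    φ (j, a) ∈ partiteEdge φ f ↔ f j = a := by
  simp [partiteEdge]

lemma partiteEdge_injective (φ : Fin r × Fin q ↪ Fin n) :
    Function.Injective (partiteEdge φ) := by
  intro f g h
  funext j
  have hf := (mem_partiteEdge φ f j (f j)).2 rfl
  rw [h] at hf
  exact ((mem_partiteEdge φ g j (f j)).1 hf).symm

lemma card_partiteEdge (φ : Fin r × Fin q ↪ Fin n) (f : Fin r → Fin q) :
    (partiteEdge φ f).card = r := by
  rw [partiteEdge, card_image_of_injective, card_univ, Fintype.card_fin]
  intro i j h
  exact congrArg Prod.fst (φ.injective h)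

/-- A nonempty family of edges of the complete `r`-partite hypergraph spanning `u` vertices has at
most `2 ^ (u - r)` members, and `r ≤ u`; the witness `d` avoids truncated subtraction. -/
lemma card_le_two_pow_span (φ : Fin r × Fin q ↪ Fin n) (T : Finset (Fin r → Fin q))
    (hT : T.Nonempty) :
    ∃ d, r + d ≤ ((T.image (partiteEdge φ)).sup id).card ∧ T.card ≤ 2 ^ d := by
  -- `A j` is the set of vertices of part `j` covered by the family.
  set A : Fin r → Finset (Fin q) := fun j => T.image fun f => f j with hA
  have hpos : ∀ j, 1 ≤ (A j).card := fun j => (hT.image _).card_pos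
  refine ⟨∑ j, ((A j).card - 1), ?_, ?_⟩
  · have hsum : r + ∑ j, ((A j).card - 1) = ∑ j, (A j).card := by
      have h : ∀ j, (A j).card = 1 + ((A j).card - 1) := fun j => by have := hpos j; omega
      rw [sum_congr rfl fun j _ => h j, sum_add_distrib]
      simp
    rw [hsum, ← card_sigma]
    refine card_le_card_of_injOn (fun p => φ (p.1, p.2)) ?_ ?_
    · rintro ⟨j, a⟩ h
      obtain ⟨f, hf, rfl⟩ : ∃ f ∈ T, f j = a := by simpa [hA] using h
      exact mem_coe.2 (mem_sup.2 ⟨partiteEdge φ f, mem_image_of_mem _ hf,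
        (mem_partiteEdge φ f j _).2 rfl⟩)
    · rintro ⟨j, a⟩ - ⟨j', a'⟩ - h
      have h' := φ.injective h
      simp only [Prod.mk.injEq] at h'
      obtain ⟨rfl, rfl⟩ := h'
      rfl
  · have hsub : T ⊆ Fintype.piFinset A := fun f hf =>
      Fintype.mem_piFinset.2 fun j => mem_image_of_mem _ hf
    calc T.card ≤ ∏ j, (A j).card := by
          simpa [Fintype.card_piFinset] using card_le_card hsub
      _ ≤ ∏ j, 2 ^ ((A j).card - 1) := by
          refine prod_le_prod' fun j _ => ?_
          have h := Nat.lt_two_pow_self (n := (A j).card - 1)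
          omega
      _ = 2 ^ ∑ j, ((A j).card - 1) := prod_pow_eq_pow_sum _ _ _

lemma isBatchCode_partite {k : ℕ} (φ : Fin r × Fin q ↪ Fin n) (hr : 1 ≤ r)
    (hpow : 2 ^ (k - 1 - r) < k) :
    IsBatchCode n r k (univ.image (partiteEdge φ)) := by
  refine ⟨?_, ?_⟩
  · intro e he
    obtain ⟨f, -, rfl⟩ := mem_image.1 he
    exact card_partiteEdge φ f
  · intro i hi hik S hS hcard
    obtain ⟨T, -, rfl⟩ := subset_image_iff.1 hS
    rw [card_image_of_injective _ (partiteEdge_injective φ)] at hcard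
    obtain ⟨d, hd, hTd⟩ := card_le_two_pow_span φ T (card_pos.1 (by omega))
    by_contra! hlt
    have h := two_pow_le_add_of_two_pow_le hr d (k - 1 - r - d) (by
      rw [show d + (k - 1 - r - d) = k - 1 - r by omega]
      omega)
    omega

end Partite

lemma card_le_of_isBatchCode {n r k : ℕ} {F : Finset (Finset (Fin n))}
    (hF : IsBatchCode n r k F) : F.card ≤ n ^ r := by
  have hsub : F ⊆ powersetCard r univ := fun e he =>
    mem_powersetCard.2 ⟨subset_univ _, hF.1 e he⟩
  calc F.card ≤ n.choose r := by simpa using card_le_card hsub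
    _ ≤ n ^ r := Nat.choose_le_pow n r

lemma m_le_pow (n r k : ℕ) : m n r k ≤ n ^ r := by
  refine csSup_le' ?_
  rintro c ⟨F, hF, rfl⟩
  exact card_le_of_isBatchCode hF

lemma card_le_m {n r k : ℕ} {F : Finset (Finset (Fin n))} (hF : IsBatchCode n r k F) :
    F.card ≤ m n r k := by
  refine le_csSup ⟨n ^ r, ?_⟩ ⟨F, hF, rfl⟩
  rintro c ⟨G, hG, rfl⟩
  exact card_le_of_isBatchCode hG

/-- For `k ≥ 6` and `k - ⌈log₂ k⌉ ≤ r ≤ k - 1`, `m(n, r, k) = Θ(n^r)`. -/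
theorem statement3 (k r : ℕ) (hk : 6 ≤ k) (hr₁ : k - Nat.clog 2 k ≤ r) (hr₂ : r ≤ k - 1) :
    ∃ c₁ c₂ : ℝ, 0 < c₁ ∧ 0 < c₂ ∧ ∃ n₀ : ℕ, ∀ n : ℕ, n₀ ≤ n →
      c₁ * (n : ℝ) ^ r ≤ (m n r k : ℝ) ∧ (m n r k : ℝ) ≤ c₂ * (n : ℝ) ^ r := by
  have hclog : 2 ^ (Nat.clog 2 k - 1) < k := Nat.pow_pred_clog_lt_self (by norm_num) (by omega)
  have hr : 1 ≤ r := by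
    -- `clog 2 k ≥ k` would force `2 ^ (k - 1) < k`.
    by_contra! h0
    have h1 : k - 1 ≤ Nat.clog 2 k - 1 := by omega
    have h2 := Nat.pow_le_pow_right (n := 2) (by norm_num) h1
    have h3 := Nat.lt_two_pow_self (n := k - 1)
    omega
  have hpow : 2 ^ (k - 1 - r) < k :=
    (Nat.pow_le_pow_right (by norm_num) (by omega)).trans_lt hclog
  have hr0 : (0 : ℝ) < r := by exact_mod_cast hr
  refine ⟨(1 / (2 * r)) ^ r, 1, by positivity, one_pos, r, fun n hn => ⟨?_, ?_⟩⟩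
  · set q := n / r with hq
    have hrq : r * q ≤ n := Nat.mul_div_le n r
    let φ : Fin r × Fin q ↪ Fin n := finProdFinEquiv.toEmbedding.trans (Fin.castLEEmb hrq)
    have hm := card_le_m (isBatchCode_partite (k := k) φ hr hpow)
    rw [card_image_of_injective _ (partiteEdge_injective φ), card_univ, Fintype.card_fun,
      Fintype.card_fin, Fintype.card_fin] at hm
    -- Since `n ≥ r`, rounding down loses at most a factor of two: `n ≤ 2 * r * q`.
    have hq1 : 1 ≤ q := (Nat.one_le_div_iff (by omega)).2 hn
    have hnq : n ≤ 2 * r * q := by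
      have h1 : n < r * q + r := by
        have h := Nat.div_add_mod n r
        rw [← hq] at h
        have := Nat.mod_lt n (show r > 0 by omega)
        omega
      nlinarith
    have hnq' : 1 / (2 * (r : ℝ)) * n ≤ q := by
      rw [one_div, inv_mul_le_iff₀ (by positivity)]
      exact_mod_cast hnq
    calc (1 / (2 * (r : ℝ))) ^ r * (n : ℝ) ^ r = (1 / (2 * (r : ℝ)) * n) ^ r := (mul_pow _ _ _).symm
      _ ≤ (q : ℝ) ^ r := by gcongr
      _ ≤ m n r k := by exact_mod_cast hm
  · rw [one_mul]
    exact_mod_cast m_le_pow n r k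
end

section
/- Let k ≥ 6, let k - ⌈log₂ k⌉ ≤ r ≤ k - 1, and let n ≥ 2k. Let V be an n-element vertex set partitioned into r pairwise disjoint parts V₁, …, V_r with |V_i| = ⌊(n+i-1)/r⌋, and let F be the family of all r-element subsets of V meeting each part V_i in exactly one vertex (the complete r-uniform r-partite hypergraph with balanced parts). Then for every i with 1 ≤ i ≤ k, every collection of i distinct edges of F spans at least i vertices; equivalently, F contains no subfamily of i distinct edges spanning at most i-1 vertices for any r+3 ≤ i ≤ k. -/
/-!
Let `W` be the vertex set spanned by `S`, and put `w j = |W ∩ V j|`. An edge is determined by its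
traces on the parts, which are single vertices of `W ∩ V j`, so `|S| ≤ ∏ w j`
(`card_le_prod_inter`). Each `w j` is at least `1` because `S` is nonempty, and `w ≤ 2 ^ (w - 1)`,
so with `d = |W| - r` one gets `|S| ≤ 2 ^ d`. If `|W| < |S| ≤ k`, then
`d ≤ k - 1 - r ≤ ⌈log₂ k⌉ - 1`, and in this range `2 ^ d ≤ r + d = |W|` (`two_pow_le_add`),
a contradiction.
-/


open Finset

/-- For `d` at most `m = ⌈log₂ k⌉ - 1`, one has `2 ^ d + (m - d) ≤ 2 ^ m ≤ k - 1`, which together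
with `k - ⌈log₂ k⌉ ≤ r` gives the bound. -/
lemma two_pow_le_add {k r d : ℕ} (hk : 2 ≤ k) (hr : k - Nat.clog 2 k ≤ r)
    (hd : d + 1 ≤ Nat.clog 2 k) : 2 ^ d ≤ r + d := by
  obtain ⟨t, ht⟩ := Nat.exists_eq_add_of_le hd
  have hlt : 2 ^ (Nat.clog 2 k - 1) < k := Nat.pow_pred_clog_lt_self (by norm_num) (by omega)
  have hm : Nat.clog 2 k - 1 = d + t := by omega
  rw [hm] at hlt
  have hpow : 2 ^ d + t ≤ 2 ^ (d + t) := by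
    have h1 : t + 1 ≤ 2 ^ t := Nat.lt_two_pow_self
    have h2 : 1 ≤ 2 ^ d := Nat.one_le_two_pow
    rw [pow_add]
    nlinarith
  omega

/-- Distinct transversals of a cover have distinct trace families, so a collection of transversals
contained in `W` has at most `∏ |W ∩ V j|` members. -/
lemma card_le_prod_inter {α ι : Type*} [DecidableEq α] [Fintype ι] [DecidableEq ι]
    (V : ι → Finset α) (hcover : ∀ x, ∃ j, x ∈ V j) (S : Finset (Finset α)) (W : Finset α)
    (hW : ∀ e ∈ S, e ⊆ W) (hS : ∀ e ∈ S, ∀ j, (e ∩ V j).card = 1) :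
    S.card ≤ ∏ j, (W ∩ V j).card := by
  have hcard : (Fintype.piFinset fun j => (W ∩ V j).powersetCard 1).card
      = ∏ j, (W ∩ V j).card := by
    simp [Fintype.card_piFinset]
  rw [← hcard]
  refine Finset.card_le_card_of_injOn (fun e j => e ∩ V j) ?_ ?_
  · intro e he
    have he : e ∈ S := by simpa using he
    simp only [Finset.mem_coe, Fintype.mem_piFinset, Finset.mem_powersetCard]
    exact fun j => ⟨Finset.inter_subset_inter_right (hW e he), hS e he j⟩
  · intro e _ f _ hef
    ext x
    obtain ⟨j, hj⟩ := hcover x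
    have h : x ∈ e ∩ V j ↔ x ∈ f ∩ V j := by rw [show e ∩ V j = f ∩ V j from congrFun hef j]
    simpa [hj] using h

/-- Let `k ≥ 6`, `k - ⌈log₂ k⌉ ≤ r ≤ k - 1`, and `n ≥ 2k`. If `Fin n` is partitioned into
`r` pairwise disjoint parts `V 0, …, V (r-1)` with `(V i).card = ⌊(n + i)/r⌋` (so the parts
are balanced), then the complete `r`-uniform `r`-partite hypergraph `F` consisting of all
`r`-element subsets meeting each part in exactly one vertex has the property that every
collection of `i` distinct edges spans at least `i` vertices, for all `1 ≤ i ≤ k`. -/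
theorem statement4 (n r k : ℕ) (hk : 6 ≤ k) (hr₁ : k - Nat.clog 2 k ≤ r) (hr₂ : r ≤ k - 1)
    (hn : 2 * k ≤ n) (V : Fin r → Finset (Fin n))
    (hdisj : ∀ i j : Fin r, i ≠ j → Disjoint (V i) (V j))
    (hcover : ∀ x : Fin n, ∃ i : Fin r, x ∈ V i)
    (hsize : ∀ i : Fin r, (V i).card = (n + (i : ℕ)) / r)
    (F : Finset (Finset (Fin n)))
    (hF : ∀ e : Finset (Fin n), e ∈ F ↔ (e.card = r ∧ ∀ i : Fin r, (e ∩ V i).card = 1)) :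
    ∀ i : ℕ, 1 ≤ i → i ≤ k → ∀ S ⊆ F, S.card = i → i ≤ (S.sup id).card := by
  intro i hi hik S hSF hSi
  set W := S.sup id
  have hW : ∀ e ∈ S, e ⊆ W := fun e he => Finset.le_sup (f := id) he
  have hS : ∀ e ∈ S, ∀ j, (e ∩ V j).card = 1 := fun e he => ((hF e).1 (hSF he)).2
  have hprod := card_le_prod_inter V hcover S W hW hS
  have hsum : ∑ j, (W ∩ V j).card = W.card := by
    rw [← Finset.card_biUnion fun a _ b _ hab =>
      (hdisj a b hab).mono Finset.inter_subset_right Finset.inter_subset_right]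
    congr 1
    ext x
    simpa using fun _ => hcover x
  obtain ⟨e, he⟩ : S.Nonempty := Finset.card_pos.1 (by omega)
  have hpos : ∀ j, 1 ≤ (W ∩ V j).card := fun j =>
    (hS e he j).symm.le.trans (Finset.card_le_card (Finset.inter_subset_inter_right (hW e he)))
  have hexp : ∑ j, ((W ∩ V j).card - 1) + r = W.card := by
    have h : ∑ j, ((W ∩ V j).card - 1 + 1) = W.card := by
      rw [← hsum]
      exact Finset.sum_congr rfl fun j _ => Nat.sub_add_cancel (hpos j)
    rw [Finset.sum_add_distrib] at h
    simpa using h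
  have hpow : ∏ j, (W ∩ V j).card ≤ 2 ^ ∑ j, ((W ∩ V j).card - 1) := by
    rw [← Finset.prod_pow_eq_pow_sum]
    refine Finset.prod_le_prod' fun j _ => ?_
    have h := Nat.lt_two_pow_self (n := (W ∩ V j).card - 1)
    have := hpos j
    omega
  by_contra! hlt
  have := two_pow_le_add (d := ∑ j, ((W ∩ V j).card - 1)) (by omega) hr₁ (by omega)
  omega
end
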